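/- Let f : 𝔻 → E be holomorphic with f(z) ≠ 0 and Π(z) the orthogonal projection onto span{f(z)}. Then the squared operator norm of ∂Π(z) equals (‖f‖²‖f'‖² − |⟨f', f⟩|²)/‖f‖⁴. -/

import Mathlib

open Complex
open scoped InnerProductSpace

/-- Wirtinger derivative `∂ = ½(∂/∂x − i·∂/∂y)`. -/
noncomputable def wD {F : Type*} [NormedAddCommGroup F] [NormedSpace ℂ F]
    (f : ℂ → F) (z : ℂ) : F :=
  (2:ℂ)⁻¹ • (fderiv ℝ f z 1 - Complex.I • fderiv ℝ f z Complex.I)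

theorem aux_bilin {E : Type*} [NormedAddCommGroup E] [InnerProductSpace ℂ E] :
    IsBoundedBilinearMap ℝ (fun p : E × E => (innerSL ℂ p.1).smulRight p.2) where
  add_left x y w := by ext v; simp [add_smul, inner_add_left]
  smul_left c x y := by
    ext v
    simp only [ContinuousLinearMap.smulRight_apply, innerSL_apply_apply,
      ContinuousLinearMap.smul_apply, inner_smul_left_eq_smul, smul_assoc]
  add_right x y w := by ext v; simp
  smul_right c x y := by
    ext v
    simp only [ContinuousLinearMap.smulRight_apply, innerSL_apply_apply,
      ContinuousLinearMap.smul_apply]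
    rw [smul_comm]
  bound := ⟨1, one_pos, fun x y => by simp [ContinuousLinearMap.norm_smulRight_apply]⟩

theorem aux_wD {E : Type*} [NormedAddCommGroup E] [InnerProductSpace ℂ E]
    (f : ℂ → E) (z : ℂ) (hf : DifferentiableAt ℂ f z) (h0 : f z ≠ 0) :
    wD f z = deriv f z ∧
    wD (fun w => ((⟪f w, f w⟫_ℂ)⁻¹ • (innerSL ℂ (f w)).smulRight (f w) : E →L[ℂ] E)) z =
      (innerSL ℂ (f z)).smulRight ((⟪f z, f z⟫_ℂ)⁻¹ • deriv f z
        - ((⟪f z, f z⟫_ℂ)⁻¹ ^ 2 * ⟪f z, deriv f z⟫_ℂ) • f z) := by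
  have hd : HasFDerivAt f _ z := hf.hasDerivAt.hasFDerivAt.restrictScalars ℝ
  have hN : ⟪f z, f z⟫_ℂ ≠ 0 := by simpa using h0
  have hin := hd.inner ℂ hd
  have hinv := (hasDerivAt_inv hN).hasFDerivAt.restrictScalars ℝ |>.comp z hin
  have hB := (aux_bilin (E := E).hasFDerivAt (f z, f z)).comp z (hd.prodMk hd)
  have hP := hinv.smul hB
  constructor
  · rw [wD, hd.fderiv]
    simp [smul_smul]
    module
  · rw [wD]
    erw [hP.fderiv]
    ext v
    simp [inner_smul_left, inner_smul_right, smul_smul]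
    generalize ⟪f z, f z⟫_ℂ = N at *
    match_scalars <;> field_simp <;> ring_nf <;> simp <;> ring_nf

/-- with `Π(z)` the orthogonal projection onto `span{f(z)}`,
`‖∂Π(z)‖² = (‖f‖²‖f'‖² − |⟨f',f⟩|²)/‖f‖⁴`. -/
theorem stmt12 {E : Type*} [NormedAddCommGroup E] [InnerProductSpace ℂ E] [CompleteSpace E]
    (f : ℂ → E) (hf : DifferentiableOn ℂ f (Metric.ball 0 1))
    (hne : ∀ z ∈ Metric.ball (0:ℂ) 1, f z ≠ 0)
    (P : ℂ → E →L[ℂ] E)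
    (hP : ∀ z, P z = (‖f z‖^2)⁻¹ • (innerSL ℂ (f z)).smulRight (f z)) :
    ∀ z ∈ Metric.ball (0:ℂ) 1,
      ‖wD P z‖^2 =
        (‖f z‖^2 * ‖wD f z‖^2 - ‖⟪f z, wD f z⟫_ℂ‖^2) / ‖f z‖^4 := by
  intro z hz
  have hfz := hf.differentiableAt (Metric.isOpen_ball.mem_nhds hz)
  have h0 := hne z hz
  have hPe : P = (fun w => ((⟪f w, f w⟫_ℂ)⁻¹ • (innerSL ℂ (f w)).smulRight (f w) : E →L[ℂ] E)) := by
    funext w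
    rw [hP, inner_self_eq_norm_sq_to_K]
    ext v
    simp [← Complex.coe_smul]
  obtain ⟨h1, h2⟩ := aux_wD f z hfz h0
  rw [hPe, h2, h1, ContinuousLinearMap.norm_smulRight_apply, innerSL_apply_norm, mul_pow]
  generalize deriv f z = d
  have hn : ‖f z‖ ≠ 0 := by simpa using h0
  have key : (⟪f z, f z⟫_ℂ)⁻¹ • d - ((⟪f z, f z⟫_ℂ)⁻¹ ^ 2 * ⟪f z, d⟫_ℂ) • f z
      = (⟪f z, f z⟫_ℂ)⁻¹ • (d - ((⟪f z, f z⟫_ℂ)⁻¹ * ⟪f z, d⟫_ℂ) • f z) := by module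
  have hpy : ‖d‖^2 = ‖d - ((⟪f z, f z⟫_ℂ)⁻¹ * ⟪f z, d⟫_ℂ) • f z‖^2
      + ‖((⟪f z, f z⟫_ℂ)⁻¹ * ⟪f z, d⟫_ℂ) • f z‖^2 := by
    have := norm_add_sq_eq_norm_sq_add_norm_sq_of_inner_eq_zero
      (𝕜 := ℂ) (d - ((⟪f z, f z⟫_ℂ)⁻¹ * ⟪f z, d⟫_ℂ) • f z)
      (((⟪f z, f z⟫_ℂ)⁻¹ * ⟪f z, d⟫_ℂ) • f z) (by
        rw [inner_smul_right]
        refine mul_eq_zero_of_right _ (inner_eq_zero_symm.mp ?_)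
        have hN : ⟪f z, f z⟫_ℂ ≠ 0 := by simpa using h0
        rw [inner_sub_right, inner_smul_right]
        field_simp
        simp)
    simpa [sq] using this
  have hNn : ‖⟪f z, f z⟫_ℂ‖ = ‖f z‖^2 := by
    rw [inner_self_eq_norm_sq_to_K]; simp
  rw [norm_smul (_ * _), norm_mul, norm_inv, hNn] at hpy
  rw [key, norm_smul, norm_inv, hNn, mul_pow, eq_sub_of_add_eq hpy.symm]
  field_simp
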